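/- arXiv:2307.06035 — 2 statements merged into one kernel-verified Lean document; each statement's English description precedes it below -/
import Mathlib

section
/- Define u on the upper half-plane by u(x + iy) = 1 − arg(x + iy)·(x/y) for y > 0 (so that in polar coordinates u = 1 − θ·cot θ with θ = arg z ∈ (0,π)). Then for every x ∈ ℝ and y > 0, y²·(∂²u/∂x² + ∂²u/∂y²)(x + iy) = 2·u(x + iy); that is, u is an eigenfunction of the hyperbolic Laplacian y²(∂²/∂x² + ∂²/∂y²) with eigenvalue 2. -/
/-- The function `u(x + iy) = 1 - arg(x + iy)·(x/y)`; in polar coordinates this is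
`u = 1 - θ·cot θ` with `θ = arg z ∈ (0, π)`. -/
noncomputable def u (x y : ℝ) : ℝ :=
  1 - Complex.arg ((x : ℂ) + (y : ℂ) * Complex.I) * (x / y)

theorem arg_eq_aux (x y : ℝ) (hy : 0 < y) :
    Complex.arg ((x : ℂ) + (y : ℂ) * Complex.I) = Real.pi / 2 - Real.arctan (x / y) := by
  have hs : 0 < Real.sqrt (1 + (x / y) ^ 2) := Real.sqrt_pos.mpr (by positivity)
  have h := Complex.arg_mul_cos_add_sin_mul_I (r := y * Real.sqrt (1 + (x / y) ^ 2))
    (θ := Real.pi / 2 - Real.arctan (x / y)) (by positivity)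
    ⟨by linarith [Real.arctan_lt_pi_div_two (x / y), Real.pi_pos],
     by linarith [Real.neg_pi_div_two_lt_arctan (x / y)]⟩
  rw [← h]
  congr 1
  rw [← Complex.ofReal_cos, ← Complex.ofReal_sin, Real.cos_pi_div_two_sub,
    Real.sin_pi_div_two_sub, Real.sin_arctan, Real.cos_arctan]
  apply Complex.ext
  · simp only [Complex.add_re, Complex.mul_re, Complex.ofReal_re, Complex.ofReal_im,
      Complex.I_re, Complex.I_im, Complex.add_im, Complex.mul_im]
    field_simp
    ring
  · simp only [Complex.add_re, Complex.mul_re, Complex.ofReal_re, Complex.ofReal_im,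
      Complex.I_re, Complex.I_im, Complex.add_im, Complex.mul_im]
    field_simp
    ring

theorem u_eq_aux (x y : ℝ) (hy : 0 < y) :
    u x y = 1 - (Real.pi / 2 - Real.arctan (x / y)) * (x / y) := by
  rw [u, arg_eq_aux x y hy]

theorem ax_aux (x y : ℝ) (hy : 0 < y) :
    HasDerivAt (fun s : ℝ => Real.pi / 2 - Real.arctan (s / y)) (-y / (x ^ 2 + y ^ 2)) x := by
  have h := (((hasDerivAt_id x).div_const y).arctan).const_sub (Real.pi / 2)
  refine h.congr_deriv ?_
  have : x ^ 2 + y ^ 2 ≠ 0 := by positivity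
  have : 1 + (x / y) ^ 2 ≠ 0 := by positivity
  simp only [id]
  field_simp
  try ring

theorem ay_aux (x y : ℝ) (hy : 0 < y) :
    HasDerivAt (fun t : ℝ => Real.pi / 2 - Real.arctan (x / t)) (x / (x ^ 2 + y ^ 2)) y := by
  have h := (((hasDerivAt_const y x).div (hasDerivAt_id y) hy.ne').arctan).const_sub (Real.pi / 2)
  refine h.congr_deriv ?_
  have : x ^ 2 + y ^ 2 ≠ 0 := by positivity
  have : 1 + (x / y) ^ 2 ≠ 0 := by positivity
  simp only [id, Pi.div_apply]
  field_simp
  try ring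

theorem uxx_aux (x y : ℝ) (hy : 0 < y) :
    iteratedDeriv 2 (fun s : ℝ => u s y) x = 2 * y ^ 2 / (x ^ 2 + y ^ 2) ^ 2 := by
  have e : deriv (fun s : ℝ => u s y) = fun s =>
      -(Real.pi / 2 - Real.arctan (s / y)) / y + s / (s ^ 2 + y ^ 2) := by
    funext s
    have e0 : (fun s : ℝ => u s y) =
        fun s => 1 - (Real.pi / 2 - Real.arctan (s / y)) * (s / y) :=
      funext fun s => u_eq_aux s y hy
    rw [e0]
    have h := ((ax_aux s y hy).mul ((hasDerivAt_id s).div_const y)).const_sub 1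
    refine (h.congr_deriv ?_).deriv
    have : s ^ 2 + y ^ 2 ≠ 0 := by positivity
    simp only [id]
    field_simp
    ring
  rw [iteratedDeriv_succ, iteratedDeriv_one, e]
  have h0 : x ^ 2 + y ^ 2 ≠ 0 := by positivity
  have h := ((ax_aux x y hy).neg.div_const y).add
    ((hasDerivAt_id x).div (((hasDerivAt_id x).pow 2).add_const (y ^ 2)) h0)
  refine (h.congr_deriv ?_).deriv
  simp only [id, Pi.pow_apply]
  field_simp
  ring

theorem uyy_aux (x y : ℝ) (hy : 0 < y) :
    iteratedDeriv 2 (fun t : ℝ => u x t) y = x ^ 2 / (y ^ 2 * (x ^ 2 + y ^ 2))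
      - 2 * (Real.pi / 2 - Real.arctan (x / y)) * x / y ^ 3
      + x ^ 2 * (x ^ 2 + 3 * y ^ 2) / (y ^ 2 * (x ^ 2 + y ^ 2) ^ 2) := by
  have e : deriv (fun t : ℝ => u x t) =ᶠ[nhds y] fun t =>
      (Real.pi / 2 - Real.arctan (x / t)) * (x / t ^ 2) - x ^ 2 / (t * (x ^ 2 + t ^ 2)) := by
    filter_upwards [lt_mem_nhds hy] with t ht
    have e0 : (fun t : ℝ => u x t) =ᶠ[nhds t]
        fun t => 1 - (Real.pi / 2 - Real.arctan (x / t)) * (x / t) := by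
      filter_upwards [lt_mem_nhds ht] with r hr using u_eq_aux x r hr
    rw [e0.deriv_eq]
    have h := ((ay_aux x t ht).mul
      ((hasDerivAt_const t x).div (hasDerivAt_id t) ht.ne')).const_sub 1
    refine (h.congr_deriv ?_).deriv
    have : x ^ 2 + t ^ 2 ≠ 0 := by positivity
    simp only [id, Pi.div_apply]
    field_simp
    ring
  rw [iteratedDeriv_succ, iteratedDeriv_one, e.deriv_eq]
  have h0 : x ^ 2 + y ^ 2 ≠ 0 := by positivity
  have h1 : y * (x ^ 2 + y ^ 2) ≠ 0 := by positivity
  have h2 : y ^ 2 ≠ 0 := by positivity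
  have h := ((ay_aux x y hy).mul
      ((hasDerivAt_const y x).div ((hasDerivAt_id y).pow 2) h2)).sub
    ((hasDerivAt_const y (x ^ 2)).div
      ((hasDerivAt_id y).mul (((hasDerivAt_id y).pow 2).const_add (x ^ 2))) h1)
  refine (h.congr_deriv ?_).deriv
  simp only [id, Pi.pow_apply, Pi.div_apply, Pi.mul_apply]
  field_simp
  ring

/-- `u` is an eigenfunction of the hyperbolic Laplacian `y²(∂²/∂x² + ∂²/∂y²)` with
eigenvalue `2`: for all `x ∈ ℝ` and `y > 0`,
`y²·(∂²u/∂x² + ∂²u/∂y²)(x + iy) = 2·u(x + iy)`. -/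
theorem laplacian_u (x y : ℝ) (hy : 0 < y) :
    y ^ 2 * (iteratedDeriv 2 (fun s : ℝ => u s y) x
        + iteratedDeriv 2 (fun t : ℝ => u x t) y)
      = 2 * u x y := by
  rw [uxx_aux x y hy, uyy_aux x y hy, u_eq_aux x y hy]
  have h0 : x ^ 2 + y ^ 2 ≠ 0 := by positivity
  field_simp
  ring
end

section
/- There exist constants c₁ > 0 and c₂ > 0 such that for every θ ∈ (0, π): c₁·sin²θ ≤ min(1 − θ·cot θ, 1 + (π − θ)·cot θ) ≤ c₂·sin²θ. (Here 1 + (π−θ)·cot θ = u(π−θ) where u(θ) = 1 − θ·cot θ.) -/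
lemma aux_low (x : ℝ) (h0 : 0 < x) (h1 : x < Real.pi) :
    1 / 3 * Real.sin x ^ 2 ≤ 1 - x * (Real.cos x / Real.sin x) := by
  have hs := Real.sin_pos_of_pos_of_lt_pi h0 h1
  have hd : ∀ y : ℝ, HasDerivAt
      (fun y => Real.sin y - y * Real.cos y - 1 / 3 * Real.sin y ^ 3)
      (y * Real.sin y - Real.sin y ^ 2 * Real.cos y) y := by
    intro y
    have h := (((Real.hasDerivAt_sin y).sub ((hasDerivAt_id y).mul (Real.hasDerivAt_cos y))).sub
      (((Real.hasDerivAt_sin y).pow 3).const_mul (1 / 3)))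
    refine h.congr_deriv ?_
    simp
    ring
  have hm : MonotoneOn (fun y => Real.sin y - y * Real.cos y - 1 / 3 * Real.sin y ^ 3)
      (Set.Icc 0 Real.pi) := by
    apply monotoneOn_of_deriv_nonneg (convex_Icc _ _)
    · exact fun y _ => (hd y).continuousAt.continuousWithinAt
    · exact fun y _ => (hd y).differentiableAt.differentiableWithinAt
    · intro y hy
      rw [interior_Icc] at hy
      rw [(hd y).deriv]
      have hsy := Real.sin_pos_of_pos_of_lt_pi hy.1 hy.2
      have h2 := Real.sin_lt hy.1
      have h3 := Real.cos_le_one y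
      have h4 : Real.sin y * Real.cos y ≤ y := by nlinarith
      nlinarith
  have := hm ⟨le_rfl, Real.pi_pos.le⟩ ⟨h0.le, h1.le⟩ h0.le
  simp only [Real.sin_zero] at this
  have e : 1 - x * (Real.cos x / Real.sin x) = (Real.sin x - x * Real.cos x) / Real.sin x := by
    field_simp
  rw [e, le_div_iff₀ hs]
  nlinarith

lemma aux_up (x : ℝ) (h0 : 0 < x) (h1 : x ≤ Real.pi / 2) :
    1 - x * (Real.cos x / Real.sin x) ≤ 1 * Real.sin x ^ 2 := by
  have hs := Real.sin_pos_of_pos_of_lt_pi h0 (by linarith [Real.pi_pos])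
  have hc : 0 ≤ Real.cos x := Real.cos_nonneg_of_mem_Icc ⟨by linarith, h1⟩
  have e : 1 - x * (Real.cos x / Real.sin x) = (Real.sin x - x * Real.cos x) / Real.sin x := by
    field_simp
  rw [e, div_le_iff₀ hs]
  have h2 := Real.sin_lt h0
  have h3 := Real.cos_le_one x
  have h4 : Real.sin x * Real.cos x ≤ x := by nlinarith
  have h5 : Real.sin x ^ 2 = 1 - Real.cos x ^ 2 := Real.sin_sq x
  rw [h5]
  nlinarith [mul_le_mul_of_nonneg_right h4 hc]

lemma aux_refl (x : ℝ) : 1 + (Real.pi - x) * (Real.cos x / Real.sin x) =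
    1 - (Real.pi - x) * (Real.cos (Real.pi - x) / Real.sin (Real.pi - x)) := by
  rw [Real.cos_pi_sub, Real.sin_pi_sub]
  ring

/-- There are universal constants `c₁, c₂ > 0` with
`c₁·sin²θ ≤ min (1 - θ·cot θ) (1 + (π - θ)·cot θ) ≤ c₂·sin²θ` for all `θ ∈ (0, π)`. -/
theorem min_u_comparable_sin_sq :
    ∃ c₁ > (0 : ℝ), ∃ c₂ > (0 : ℝ), ∀ θ : ℝ, 0 < θ → θ < Real.pi →
      c₁ * Real.sin θ ^ 2 ≤
          min (1 - θ * (Real.cos θ / Real.sin θ))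
            (1 + (Real.pi - θ) * (Real.cos θ / Real.sin θ)) ∧
        min (1 - θ * (Real.cos θ / Real.sin θ))
            (1 + (Real.pi - θ) * (Real.cos θ / Real.sin θ)) ≤ c₂ * Real.sin θ ^ 2 := by
  refine ⟨1 / 3, by norm_num, 1, one_pos, fun x h0 h1 => ⟨?_, ?_⟩⟩
  · refine le_min (aux_low x h0 h1) ?_
    rw [aux_refl, ← Real.sin_pi_sub x]
    exact aux_low _ (by linarith) (by linarith)
  · rcases le_total x (Real.pi / 2) with h | h
    · exact (min_le_left _ _).trans (aux_up x h0 h)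
    · refine (min_le_right _ _).trans ?_
      rw [aux_refl, ← Real.sin_pi_sub x]
      exact aux_up _ (by linarith) (by linarith)
end
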